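/- arXiv:2002.06825 — 2 statements merged into one kernel-verified Lean document; each statement's English description precedes it below -/
import Mathlib

section
/- Let D be a DAG with node set V, let X ⊂ V and Y ∈ V \ X, and suppose that there exists a valid adjustment set relative to (X,{Y}) in D (generalised adjustment criterion). Then every edge that is present in the forbidden projection D^{XY} but not in D is a directed edge into Y. -/
/-! Framework for causal graphs: mixed graphs (directed, undirected, bi-directed edges),
paths as lists of typed steps, (possibly) directed paths, descendants, causal nodes,
forbidden sets, (definite-status) blocking, valid adjustment sets, Meek's rules,
maxPDAGs, latent/forbidden projections, d-separation. -/

namespace Causal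

universe u

variable {V : Type u}

/-- A mixed graph with directed, undirected and bi-directed edge relations. -/
structure MixedGraph (V : Type u) where
  dir : V → V → Prop
  undir : V → V → Prop
  bidir : V → V → Prop

/-- The kind of an edge as traversed along a path: forward directed (`a → b`),
backward directed (`a ← b`), undirected (`a − b`), or bi-directed (`a ↔ b`). -/
inductive EdgeKind : Type
  | fwd | bwd | und | bid
  deriving DecidableEq

/-- A step of a path: source node, kind of traversed edge, destination node. -/
abbrev Step (V : Type u) := V × EdgeKind × V

namespace Step
def src (s : Step V) : V := s.1
def kind (s : Step V) : EdgeKind := s.2.1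
def dst (s : Step V) : V := s.2.2
end Step

/-- The step `s` traverses an actual edge of `G`. Undirected and bi-directed
edge relations are used symmetrically. -/
def stepOK (G : MixedGraph V) (s : Step V) : Prop :=
  match Step.kind s with
  | EdgeKind.fwd => G.dir (Step.src s) (Step.dst s)
  | EdgeKind.bwd => G.dir (Step.dst s) (Step.src s)
  | EdgeKind.und => G.undir (Step.src s) (Step.dst s) ∨ G.undir (Step.dst s) (Step.src s)
  | EdgeKind.bid => G.bidir (Step.src s) (Step.dst s) ∨ G.bidir (Step.dst s) (Step.src s)

/-- The sequence of nodes visited by a list of steps. -/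
def pathNodes : List (Step V) → List V
  | [] => []
  | s :: rest => Step.src s :: (s :: rest).map Step.dst

/-- `p` is a path in `G`: a nonempty chain of valid steps visiting distinct nodes. -/
structure IsPath (G : MixedGraph V) (p : List (Step V)) : Prop where
  nonempty : p ≠ []
  valid : ∀ s ∈ p, stepOK G s
  chain : p.Chain' (fun s t => Step.dst s = Step.src t)
  nodup : (pathNodes p).Nodup

/-- The path starts at node `a`. -/
def startsAt (p : List (Step V)) (a : V) : Prop := (pathNodes p).head? = some a

/-- The path ends at node `b`. -/
def endsAt (p : List (Step V)) (b : V) : Prop := (pathNodes p).getLast? = some b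

/-- The non-endpoint (interior) nodes of the path. -/
def interiorNodes (p : List (Step V)) : List V := ((pathNodes p).drop 1).dropLast

/-- Consecutive pairs of steps of a path. -/
def stepPairs (p : List (Step V)) : List (Step V × Step V) := p.zip p.tail

/-- Does an edge of this kind have an arrowhead at the destination of its step? -/
def headAtDst : EdgeKind → Prop
  | EdgeKind.fwd => True | EdgeKind.bwd => False
  | EdgeKind.und => False | EdgeKind.bid => True

/-- Does an edge of this kind have an arrowhead at the source of its step? -/
def headAtSrc : EdgeKind → Prop
  | EdgeKind.fwd => False | EdgeKind.bwd => True
  | EdgeKind.und => False | EdgeKind.bid => True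

/-- `v` is a collider on the path `p`: both adjacent edges have an arrowhead at `v`. -/
def colliderAt (p : List (Step V)) (v : V) : Prop :=
  ∃ q ∈ stepPairs p, Step.dst q.1 = v ∧ headAtDst (Step.kind q.1) ∧ headAtSrc (Step.kind q.2)

/-- `v` is a non-endpoint non-collider on the path `p`. -/
def nonColliderAt (p : List (Step V)) (v : V) : Prop :=
  v ∈ interiorNodes p ∧ ¬ colliderAt p v

/-- Two nodes are adjacent if they are joined by some edge. -/
def adjacent (G : MixedGraph V) (a b : V) : Prop :=
  G.dir a b ∨ G.dir b a ∨ G.undir a b ∨ G.undir b a ∨ G.bidir a b ∨ G.bidir b a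

/-- `v` is a definite non-collider on `p`: at least one adjacent edge is directed
out of `v`, or both adjacent edges are undirected and the neighbours of `v` on `p`
are non-adjacent. -/
def defNonColliderAt (G : MixedGraph V) (p : List (Step V)) (v : V) : Prop :=
  ∃ q ∈ stepPairs p, Step.dst q.1 = v ∧
    (Step.kind q.1 = EdgeKind.bwd ∨ Step.kind q.2 = EdgeKind.fwd ∨
      (Step.kind q.1 = EdgeKind.und ∧ Step.kind q.2 = EdgeKind.und ∧
        ¬ adjacent G (Step.src q.1) (Step.dst q.2)))

/-- Every non-endpoint node of `p` is a collider or a definite non-collider. -/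
def definiteStatus (G : MixedGraph V) (p : List (Step V)) : Prop :=
  ∀ q ∈ stepPairs p,
    (headAtDst (Step.kind q.1) ∧ headAtSrc (Step.kind q.2)) ∨
    (Step.kind q.1 = EdgeKind.bwd ∨ Step.kind q.2 = EdgeKind.fwd ∨
      (Step.kind q.1 = EdgeKind.und ∧ Step.kind q.2 = EdgeKind.und ∧
        ¬ adjacent G (Step.src q.1) (Step.dst q.2)))

/-- All steps of the path traverse directed edges forwards (a causal/directed path). -/
def allFwd (p : List (Step V)) : Prop := ∀ s ∈ p, Step.kind s = EdgeKind.fwd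

/-- `p` is a directed (causal) path in `G` from `a` to `b`. -/
def directedPathFromTo (G : MixedGraph V) (p : List (Step V)) (a b : V) : Prop :=
  IsPath G p ∧ allFwd p ∧ startsAt p a ∧ endsAt p b

/-- `p` is possibly directed: every edge is undirected or traversed forwards, and
there are no indices `i < j` with a directed edge from the `j`-th to the `i`-th node. -/
def possiblyDirected (G : MixedGraph V) (p : List (Step V)) : Prop :=
  (∀ s ∈ p, Step.kind s = EdgeKind.fwd ∨ Step.kind s = EdgeKind.und) ∧
  (pathNodes p).Pairwise (fun a b => ¬ G.dir b a)

/-- `b` is a descendant of `a`: `b = a` or a directed path from `a` to `b` exists. -/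
def descendant (G : MixedGraph V) (a b : V) : Prop :=
  a = b ∨ ∃ p, directedPathFromTo G p a b

/-- The descendants of a node set. -/
def deSet (G : MixedGraph V) (A : Set V) : Set V := {b | ∃ a ∈ A, descendant G a b}

/-- `b` is a possible descendant of `a`. -/
def possDescendant (G : MixedGraph V) (a b : V) : Prop :=
  a = b ∨ ∃ p, IsPath G p ∧ possiblyDirected G p ∧ startsAt p a ∧ endsAt p b

/-- The possible descendants of a node set. -/
def possdeSet (G : MixedGraph V) (A : Set V) : Set V := {b | ∃ a ∈ A, possDescendant G a b}

/-- `p` is a proper path from `X` to `Y`: only its first node lies in `X`. -/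
def properFromTo (G : MixedGraph V) (p : List (Step V)) (X Y : Set V) : Prop :=
  IsPath G p ∧ (∃ a ∈ X, startsAt p a) ∧ (∃ b ∈ Y, endsAt p b) ∧
    ∀ v ∈ (pathNodes p).tail, v ∉ X

/-- The causal nodes: nodes on proper directed paths from `X` to `Y`, excluding `X`. -/
def cn (G : MixedGraph V) (X Y : Set V) : Set V :=
  {v | v ∉ X ∧ ∃ p, properFromTo G p X Y ∧ allFwd p ∧ v ∈ pathNodes p}

/-- The possibly causal nodes: nodes on proper possibly directed paths from `X` to `Y`,
excluding `X`. -/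
def posscn (G : MixedGraph V) (X Y : Set V) : Set V :=
  {v | v ∉ X ∧ ∃ p, properFromTo G p X Y ∧ possiblyDirected G p ∧ v ∈ pathNodes p}

/-- The forbidden set for DAG-like graphs: `de(cn(X,Y,G),G) ∪ X`. -/
def forbD (G : MixedGraph V) (X Y : Set V) : Set V := deSet G (cn G X Y) ∪ X

/-- The forbidden set for maxPDAGs: `possde(posscn(X,Y,G),G) ∪ X`. -/
def forbP (G : MixedGraph V) (X Y : Set V) : Set V := possdeSet G (posscn G X Y) ∪ X

/-- Parents of a node set (via directed edges). -/
def paSet (G : MixedGraph V) (A : Set V) : Set V := {w | ∃ a ∈ A, G.dir w a}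

/-- The O-set for DAG-like graphs: `pa(cn(X,Y,G),G) \ forb(X,Y,G)`. -/
def OsetD (G : MixedGraph V) (X Y : Set V) : Set V := paSet G (cn G X Y) \ forbD G X Y

/-- The O-set for maxPDAGs: `pa(cn(X,Y,G),G) \ forb(X,Y,G)`. -/
def OsetP (G : MixedGraph V) (X Y : Set V) : Set V := paSet G (cn G X Y) \ forbP G X Y

/-- `v` is an ancestor (via directed paths) of some node of `C`. -/
def ancestorOfSome (G : MixedGraph V) (v : V) (C : Set V) : Prop :=
  ∃ c ∈ C, descendant G v c

/-- The path `p` is blocked by `C`: it contains a non-collider in `C` or a collider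
that is not an ancestor of any node of `C`. -/
def blocked (G : MixedGraph V) (p : List (Step V)) (C : Set V) : Prop :=
  (∃ v ∈ C, nonColliderAt p v) ∨ (∃ v, colliderAt p v ∧ ¬ ancestorOfSome G v C)

/-- The definite-status path `p` is blocked by `C`: it contains a definite non-collider
in `C` or a collider that is not an ancestor of any node of `C`. -/
def blockedDef (G : MixedGraph V) (p : List (Step V)) (C : Set V) : Prop :=
  (∃ v ∈ C, defNonColliderAt G p v) ∨ (∃ v, colliderAt p v ∧ ¬ ancestorOfSome G v C)

/-- Generalised adjustment criterion for DAGs/ADMGs: `Z` is disjoint from `X ∪ Y` and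
from the forbidden set, and every proper non-causal path from `X` to `Y` is blocked. -/
def validAdjDAG (G : MixedGraph V) (X Y Z : Set V) : Prop :=
  Z ∩ (X ∪ Y) = ∅ ∧ Z ∩ forbD G X Y = ∅ ∧
  ∀ p, properFromTo G p X Y → ¬ allFwd p → blocked G p Z

/-- `G` is amenable relative to `(X,Y)`: every proper possibly directed path from `X`
to `Y` starts with a directed edge out of `X`. -/
def amenable (G : MixedGraph V) (X Y : Set V) : Prop :=
  ∀ p, properFromTo G p X Y → possiblyDirected G p →
    ∃ s rest, p = s :: rest ∧ Step.kind s = EdgeKind.fwd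

/-- Generalised adjustment criterion for maxPDAGs: `Z` is disjoint from `X ∪ Y`,
`G` is amenable relative to `(X,Y)`, `Z` avoids the forbidden set, and every proper
non-causal definite-status path from `X` to `Y` is blocked by `Z`. -/
def validAdjMax (G : MixedGraph V) (X Y Z : Set V) : Prop :=
  Z ∩ (X ∪ Y) = ∅ ∧ amenable G X Y ∧ Z ∩ forbP G X Y = ∅ ∧
  ∀ p, properFromTo G p X Y → definiteStatus G p → ¬ possiblyDirected G p →
    blockedDef G p Z

/-- A PDAG: a simple graph with only directed and undirected edges and
no directed cycles. -/
structure IsPDAG (G : MixedGraph V) : Prop where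
  no_bidir : ∀ a b, ¬ G.bidir a b
  undir_symm : ∀ a b, G.undir a b → G.undir b a
  dir_irrefl : ∀ a, ¬ G.dir a a
  undir_irrefl : ∀ a, ¬ G.undir a a
  simple_dd : ∀ a b, G.dir a b → ¬ G.dir b a
  simple_du : ∀ a b, G.dir a b → ¬ G.undir a b
  acyclic : ∀ a b, (∃ p, directedPathFromTo G p a b) → ¬ G.dir b a

/-- A DAG: a PDAG without undirected edges. -/
structure IsDAG (G : MixedGraph V) extends IsPDAG G : Prop where
  no_undir : ∀ a b, ¬ G.undir a b

/-- A maximally oriented PDAG: a PDAG closed under Meek's rules R1–R4. -/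
structure IsMaxPDAG (G : MixedGraph V) extends IsPDAG G : Prop where
  meek1 : ∀ a b c, G.dir a b → G.undir b c → ¬ adjacent G a c → G.dir b c
  meek2 : ∀ a b c, G.dir a b → G.dir b c → G.undir a c → G.dir a c
  meek3 : ∀ a b c d, G.undir a b → G.undir a c → G.undir a d → G.dir b d → G.dir c d →
      ¬ adjacent G b c → G.dir a d
  meek4 : ∀ a b c d, G.undir a b → G.dir a c → G.undir b c → G.dir c d → G.undir b d →
      G.dir b d

/-- The first edge of the path has an arrowhead at the first node. -/
def startsWithArrowIn (p : List (Step V)) : Prop :=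
  ∃ s rest, p = s :: rest ∧ headAtSrc (Step.kind s)

/-- The last edge of the path has an arrowhead at the last node. -/
def endsWithArrowIn (p : List (Step V)) : Prop :=
  ∃ s rest, p = rest ++ [s] ∧ headAtDst (Step.kind s)

/-- Projection of `G` over the node set `F`: the graph on the nodes outside `F` with
(i) a directed edge `a → b` iff `G` has a directed path from `a` to `b` with all
non-endpoint nodes in `F`; (ii) a bi-directed edge `a ↔ b` iff `G` has a path with
at least one non-endpoint node, of the form `a ← ⋯ → b`, on which every non-endpoint
node is a non-collider and lies in `F`; (iii) an undirected edge `a − b` iff `G` has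
the undirected edge `a − b`. -/
def forbProjection (G : MixedGraph V) (F : Set V) : MixedGraph V where
  dir a b := a ∉ F ∧ b ∉ F ∧
    ∃ p, directedPathFromTo G p a b ∧ ∀ v ∈ interiorNodes p, v ∈ F
  bidir a b := a ∉ F ∧ b ∉ F ∧
    ∃ p, IsPath G p ∧ startsAt p a ∧ endsAt p b ∧ interiorNodes p ≠ [] ∧
      startsWithArrowIn p ∧ endsWithArrowIn p ∧
      ∀ v ∈ interiorNodes p, v ∈ F ∧ ¬ colliderAt p v
  undir a b := a ∉ F ∧ b ∉ F ∧ G.undir a b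

/-- The forbidden projection of a DAG `D` with respect to `(X,Y)`:
the latent projection over `forb(X,Y,D) \ (X ∪ Y)`. -/
def dagProj (D : MixedGraph V) (X Y : Set V) : MixedGraph V :=
  forbProjection D (forbD D X Y \ (X ∪ Y))

/-- The forbidden projection of a maxPDAG `G` with respect to `(X,Y)`:
the projection over `forb(X,Y,G) \ (X ∪ Y)`. -/
def maxProj (G : MixedGraph V) (X Y : Set V) : MixedGraph V :=
  forbProjection G (forbP G X Y \ (X ∪ Y))

/-- `A` and `B` are d-separated given `C` in `G`: every path between a node of `A`
and a node of `B` is blocked by `C`. -/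
def dSep (G : MixedGraph V) (A B C : Set V) : Prop :=
  ∀ p a b, a ∈ A → b ∈ B → IsPath G p → startsAt p a → endsAt p b → blocked G p C

/-- A v-structure `a → b ← c` with `a`, `c` non-adjacent. -/
def vStructure (G : MixedGraph V) (a b c : V) : Prop :=
  a ≠ c ∧ G.dir a b ∧ G.dir c b ∧ ¬ adjacent G a c

/-- The DAG `D` is represented by the maxPDAG `G` (i.e. `D ∈ [G]`): `D` is a DAG
with the same adjacencies and v-structures as `G`, and every directed edge of `G`
occurs in `D` with the same orientation. -/
def represents (G D : MixedGraph V) : Prop :=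
  IsDAG D ∧ (∀ a b, adjacent G a b ↔ adjacent D a b) ∧
  (∀ a b c, vStructure G a b c ↔ vStructure D a b c) ∧
  (∀ a b, G.dir a b → D.dir a b)

/-- One step of the pruning procedure: remove from `Z` a node `z` such that `Y` is
d-separated from `z` given `{X} ∪ (Z \ {z})`. -/
def pruneStep (G : MixedGraph V) (X Y : V) (Z Z' : Set V) : Prop :=
  ∃ z ∈ Z, dSep G {Y} {z} ({X} ∪ (Z \ {z})) ∧ Z' = Z \ {z}

/-- `Z'` is a possible result of the pruning procedure started at `Z`: it is reachable
by pruning steps and no further node can be removed. -/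
def pruneResult (G : MixedGraph V) (X Y : V) (Z Z' : Set V) : Prop :=
  Relation.ReflTransGen (pruneStep G X Y) Z Z' ∧
  ∀ z ∈ Z', ¬ dSep G {Y} {z} ({X} ∪ (Z' \ {z}))

end Causal

/-! Suppose a descendant `b` of a causal node is followed by an edge `b → x` with `x ∈ X`, and take
the first such `x`. Going back from `x` to the causal node and on to `Y`, and cutting out
repetitions, gives a proper non-causal path that has no collider and meets only forbidden nodes
after `x`; such a path is blocked by no `Z` disjoint from the forbidden set. Hence a valid
adjustment set forces the descendants of causal nodes to avoid `X`, so the nodes projected out are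
exactly these descendants minus `Y`. Directed edges leave this set only into `Y`, so a new directed
edge of the projection points into `Y`, and a bi-directed one has both ends in `Y`, which is
impossible when `Y` is a single node. -/

namespace Causal

variable {V : Type*} {G : MixedGraph V} {s : Step V} {p : List (Step V)} {a b c d v x : V}
  {F S X Y Z : Set V}

/-- `p` is a possibly empty path in `G` from `a` to `b`. Unlike `IsPath`, it allows the trivial path
from a node to itself, so that a path can be truncated at any of its nodes. -/
inductive IsPathFromTo (G : MixedGraph V) : List (Step V) → V → V → Prop
  | nil (a : V) : IsPathFromTo G [] a a
  | cons {s : Step V} {p : List (Step V)} {b : V} (hs : stepOK G s)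
      (hp : IsPathFromTo G p s.dst b) (hsrc : s.src ∉ s.dst :: p.map Step.dst) :
      IsPathFromTo G (s :: p) s.src b

namespace IsPathFromTo

theorem cons_map_dst (h : IsPathFromTo G p a b) :
    a :: p.map Step.dst = p.map Step.src ++ [b] := by
  induction h with
  | nil => rfl
  | cons _ _ _ ih => simp [← ih]

theorem nodup (h : IsPathFromTo G p a b) : (a :: p.map Step.dst).Nodup := by
  induction h with
  | nil => simp
  | cons _ _ hsrc ih => exact List.nodup_cons.2 ⟨hsrc, ih⟩

theorem stepOK_of_mem (h : IsPathFromTo G p a b) (hs : s ∈ p) : stepOK G s := by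
  induction h with
  | nil => simp at hs
  | cons ht _ _ ih =>
    rcases List.mem_cons.1 hs with rfl | hs
    exacts [ht, ih hs]

theorem src_eq_of_cons (h : IsPathFromTo G (s :: p) a b) : s.src = a := by
  cases h; rfl

theorem dst_eq_of_concat (h : IsPathFromTo G (p ++ [s]) a b) : s.dst = b := by
  have := congrArg List.getLast? h.cons_map_dst
  simpa [List.getLast?_cons] using this

theorem isChain (h : IsPathFromTo G p a b) :
    p.IsChain (fun s t => s.dst = t.src) := by
  induction h with
  | nil => simp
  | cons _ hp _ ih =>
    refine List.isChain_cons.2 ⟨fun t ht => ?_, ih⟩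
    obtain ⟨q, rfl⟩ := List.head?_eq_some_iff.1 ht
    exact hp.src_eq_of_cons.symm

theorem pathNodes_eq (h : IsPathFromTo G p a b) (hp : p ≠ []) :
    pathNodes p = a :: p.map Step.dst := by
  cases h with
  | nil => exact absurd rfl hp
  | cons => rfl

theorem exists_suffix (h : IsPathFromTo G p a b) (hv : v ∈ a :: p.map Step.dst) :
    ∃ q, q <:+ p ∧ IsPathFromTo G q v b := by
  induction h with
  | nil a =>
    obtain rfl : v = a := by simpa using hv
    exact ⟨[], List.suffix_rfl, nil v⟩
  | cons hs hp hsrc ih =>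
    rcases List.mem_cons.1 hv with rfl | hv
    · exact ⟨_, List.suffix_rfl, cons hs hp hsrc⟩
    · obtain ⟨q, hq, hqv⟩ := ih hv
      exact ⟨q, hq.trans (List.suffix_cons _ _), hqv⟩

theorem exists_suffix_cons (h : IsPathFromTo G p s.dst b) (hs : stepOK G s) :
    ∃ q, q <:+ s :: p ∧ IsPathFromTo G q s.src b := by
  by_cases hsrc : s.src ∈ s.dst :: p.map Step.dst
  · obtain ⟨q, hq, hqs⟩ := h.exists_suffix hsrc
    exact ⟨q, hq.trans (List.suffix_cons _ _), hqs⟩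
  · exact ⟨_, List.suffix_rfl, cons hs h hsrc⟩

end IsPathFromTo

theorem startsAt_cons_iff : startsAt (s :: p) a ↔ s.src = a := by
  simp [startsAt, pathNodes]

theorem IsPath.tail {t : Step V} (h : IsPath G (s :: t :: p)) :
    s.dst = t.src ∧ IsPath G (t :: p) := by
  have hchain : s.dst = t.src ∧ (t :: p).IsChain fun s t => s.dst = t.src :=
    List.isChain_cons_cons.1 h.chain
  have hnodes : pathNodes (s :: t :: p) = s.src :: pathNodes (t :: p) := by
    simp [pathNodes, hchain.1]
  exact ⟨hchain.1, by simp, fun u hu => h.valid u (List.mem_cons_of_mem _ hu), hchain.2,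
    (hnodes ▸ h.nodup).of_cons⟩

theorem IsPath.isPathFromTo (h : IsPath G p) (ha : startsAt p a) (hb : endsAt p b) :
    IsPathFromTo G p a b := by
  induction p generalizing a with
  | nil => exact absurd rfl h.nonempty
  | cons s p ih =>
    obtain rfl := startsAt_cons_iff.1 ha
    refine .cons (h.valid s (by simp)) ?_ (List.nodup_cons.1 h.nodup).1
    cases p with
    | nil =>
      obtain rfl : s.dst = b := by simpa [endsAt, pathNodes] using hb
      exact .nil _
    | cons t p =>
      exact ih h.tail.2 (startsAt_cons_iff.2 h.tail.1.symm) (by simpa [endsAt, pathNodes] using hb)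

theorem isPathFromTo_iff (hp : p ≠ []) :
    IsPathFromTo G p a b ↔ IsPath G p ∧ startsAt p a ∧ endsAt p b := by
  refine ⟨fun h => ⟨⟨hp, fun s => h.stepOK_of_mem, h.isChain, ?_⟩, ?_, ?_⟩,
    fun h => h.1.isPathFromTo h.2.1 h.2.2⟩
  · exact h.pathNodes_eq hp ▸ h.nodup
  · simp [startsAt, h.pathNodes_eq hp]
  · simp [endsAt, h.pathNodes_eq hp, h.cons_map_dst]

theorem IsPathFromTo.reflTransGen (h : IsPathFromTo G p a b) (hfwd : allFwd p) :
    Relation.ReflTransGen G.dir a b := by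
  induction h with
  | nil => exact .refl
  | @cons s p b hs _ _ ih =>
    obtain ⟨hkind, hfwd⟩ := List.forall_mem_cons.1 hfwd
    exact .head (by simpa [stepOK, hkind] using hs) (ih hfwd)

theorem exists_isPathFromTo_of_reflTransGen (h : Relation.ReflTransGen G.dir a b) :
    ∃ p, IsPathFromTo G p a b ∧ allFwd p := by
  induction h using Relation.ReflTransGen.head_induction_on with
  | refl => exact ⟨[], .nil b, by simp [allFwd]⟩
  | @head a c hac _ ih =>
    obtain ⟨p, hp, hfwd⟩ := ih
    obtain ⟨q, hq, hqa⟩ := hp.exists_suffix_cons (s := (a, .fwd, c)) hac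
    have hcons : allFwd ((a, .fwd, c) :: p) := List.forall_mem_cons.2 ⟨rfl, hfwd⟩
    exact ⟨q, hqa, fun t ht => hcons t (hq.subset ht)⟩

theorem descendant_iff_reflTransGen : descendant G a b ↔ Relation.ReflTransGen G.dir a b := by
  constructor
  · rintro (rfl | ⟨p, hp, hfwd, ha, hb⟩)
    exacts [.refl, (hp.isPathFromTo ha hb).reflTransGen hfwd]
  · intro h
    obtain ⟨p, hp, hfwd⟩ := exists_isPathFromTo_of_reflTransGen h
    rcases eq_or_ne p [] with rfl | hne
    · cases hp
      exact .inl rfl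
    · obtain ⟨hpath, ha, hb⟩ := (isPathFromTo_iff hne).1 hp
      exact .inr ⟨p, hpath, hfwd, ha, hb⟩

theorem subset_deSet (G : MixedGraph V) (S : Set V) : S ⊆ deSet G S :=
  fun a ha => ⟨a, ha, .inl rfl⟩

theorem mem_deSet_of_reflTransGen (ha : a ∈ deSet G S) (h : Relation.ReflTransGen G.dir a b) :
    b ∈ deSet G S := by
  obtain ⟨c, hc, hca⟩ := ha
  exact ⟨c, hc, descendant_iff_reflTransGen.2 ((descendant_iff_reflTransGen.1 hca).trans h)⟩

/-- `p` has no collider, so that a node set blocks it only by containing one of its interior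
nodes. -/
def IsColliderFree (p : List (Step V)) : Prop := ∀ v, ¬ colliderAt p v

theorem isChain_iff_forall_mem_stepPairs {R : Step V → Step V → Prop} :
    p.IsChain R ↔ ∀ q ∈ stepPairs p, R q.1 q.2 := by
  induction p with
  | nil => simp [stepPairs]
  | cons s p ih => cases p <;> simp_all [stepPairs]

theorem isColliderFree_iff_isChain :
    IsColliderFree p ↔ p.IsChain fun s t => ¬ (headAtDst s.kind ∧ headAtSrc t.kind) := by
  rw [isChain_iff_forall_mem_stepPairs]
  exact ⟨fun h q hq hcol => h _ ⟨q, hq, rfl, hcol⟩, fun h _ ⟨q, hq, _, hcol⟩ => h q hq hcol⟩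

theorem IsColliderFree.suffix {q : List (Step V)} (h : IsColliderFree p) (hq : q <:+ p) :
    IsColliderFree q :=
  isColliderFree_iff_isChain.2 ((isColliderFree_iff_isChain.1 h).suffix hq)

theorem IsColliderFree.cons_bwd (h : IsColliderFree p) (a b : V) :
    IsColliderFree ((a, .bwd, b) :: p) :=
  isColliderFree_iff_isChain.2 <| List.isChain_cons.2
    ⟨fun _ _ hcol => hcol.1, isColliderFree_iff_isChain.1 h⟩

theorem allFwd.isColliderFree (h : allFwd p) : IsColliderFree p := by
  rw [isColliderFree_iff_isChain, List.isChain_iff_forall_rel_of_append_cons_cons]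
  rintro s t _ _ rfl ⟨-, ht⟩
  simp [h t (by simp), headAtSrc] at ht

/-- `a` is joined to a node of `Y` by a possibly empty path without colliders all of whose nodes,
including both endpoints, lie in `S`. -/
def JoinedWithin (G : MixedGraph V) (S Y : Set V) (a : V) : Prop :=
  ∃ p, ∃ b ∈ Y, IsPathFromTo G p a b ∧ IsColliderFree p ∧ ∀ v ∈ a :: p.map Step.dst, v ∈ S

theorem JoinedWithin.of_dir (hb : JoinedWithin G S Y b) (hbd : G.dir b d) (hd : d ∈ S) :
    JoinedWithin G S Y d := by
  obtain ⟨p, y, hy, hp, hcol, hS⟩ := hb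
  obtain ⟨q, hq, hqd⟩ := hp.exists_suffix_cons (s := (d, .bwd, b)) hbd
  refine ⟨q, y, hy, hqd, (hcol.cons_bwd d b).suffix hq, List.forall_mem_cons.2 ⟨hd, ?_⟩⟩
  exact fun v hv => hS v ((hq.map Step.dst).subset hv)

theorem joinedWithin_of_mem_cn (hc : c ∈ cn G X Y) : JoinedWithin G (forbD G X Y \ X) Y c := by
  obtain ⟨hcX, p, hproper, hfwd, hcp⟩ := hc
  have hforb : ∀ v ∈ pathNodes p, v ∉ X → v ∈ forbD G X Y \ X := fun v hv hvX =>
    ⟨.inl (subset_deSet G _ ⟨hvX, p, hproper, hfwd, hv⟩), hvX⟩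
  obtain ⟨hp, ⟨a, -, hpa⟩, ⟨b, hb, hpb⟩, htail⟩ := hproper
  have hpath := hp.isPathFromTo hpa hpb
  rw [hpath.pathNodes_eq hp.nonempty] at hforb hcp htail
  obtain ⟨q, hq, hqc⟩ := hpath.exists_suffix hcp
  refine ⟨q, b, hb, hqc, hfwd.isColliderFree.suffix hq,
    List.forall_mem_cons.2 ⟨hforb c hcp hcX, fun v hv => ?_⟩⟩
  have hvp : v ∈ p.map Step.dst := (hq.map Step.dst).subset hv
  exact hforb v (List.mem_cons_of_mem a hvp) (htail v hvp)

namespace validAdjDAG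

theorem not_dir_of_joinedWithin (hZ : validAdjDAG G X Y Z)
    (hb : JoinedWithin G (forbD G X Y \ X) Y b) (hx : x ∈ X) : ¬ G.dir b x := by
  intro hbx
  obtain ⟨p, y, hy, hp, hcol, hS⟩ := hb
  have hpath : IsPathFromTo G ((x, .bwd, b) :: p) x y :=
    .cons (s := (x, .bwd, b)) hbx hp fun h => (hS x h).2 hx
  obtain ⟨hisPath, hstart, hend⟩ := (isPathFromTo_iff (by simp)).1 hpath
  have hproper : properFromTo G ((x, .bwd, b) :: p) X Y :=
    ⟨hisPath, ⟨x, hx, hstart⟩, ⟨y, hy, hend⟩, fun v hv => (hS v hv).2⟩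
  have hnoncausal : ¬ allFwd ((x, .bwd, b) :: p) := fun h => by
    simpa [Step.kind] using h _ List.mem_cons_self
  rcases hZ.2.2 _ hproper hnoncausal with ⟨v, hvZ, hv, -⟩ | ⟨v, hv, -⟩
  · have hvS : v ∈ forbD G X Y \ X := hS v (List.dropLast_subset _ hv)
    exact (Set.disjoint_iff_inter_eq_empty.2 hZ.2.1).notMem_of_mem_left hvZ hvS.1
  · exact hcol.cons_bwd x b v hv

theorem disjoint_deSet_cn (hZ : validAdjDAG G X Y Z) : Disjoint (deSet G (cn G X Y)) X := by
  suffices ∀ b ∈ deSet G (cn G X Y), JoinedWithin G (forbD G X Y \ X) Y b from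
    Set.disjoint_left.2 fun b hb => by
      obtain ⟨p, y, -, -, -, hS⟩ := this b hb
      exact (hS b List.mem_cons_self).2
  rintro b ⟨c, hc, hcb⟩
  rw [descendant_iff_reflTransGen] at hcb
  induction hcb with
  | refl => exact joinedWithin_of_mem_cn hc
  | @tail b d hcb hbd hb =>
    have hd : d ∈ deSet G (cn G X Y) := ⟨c, hc, descendant_iff_reflTransGen.2 (hcb.tail hbd)⟩
    exact hb.of_dir hbd ⟨.inl hd, fun hdX => hZ.not_dir_of_joinedWithin hb hdX hbd⟩

theorem forbD_diff_eq (hZ : validAdjDAG G X Y Z) :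
    forbD G X Y \ (X ∪ Y) = deSet G (cn G X Y) \ Y := by
  rw [forbD, ← Set.sdiff_sdiff, Set.union_sdiff_right, hZ.disjoint_deSet_cn.sdiff_eq_left]

theorem mem_of_reflTransGen (hZ : validAdjDAG G X Y Z) (hv : v ∈ forbD G X Y \ (X ∪ Y))
    (hvb : Relation.ReflTransGen G.dir v b) (hb : b ∉ forbD G X Y \ (X ∪ Y)) : b ∈ Y := by
  rw [hZ.forbD_diff_eq] at hv hb
  by_contra hbY
  exact hb ⟨mem_deSet_of_reflTransGen hv.1 hvb, hbY⟩

end validAdjDAG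

theorem dst_mem_interiorNodes (hp : p ≠ []) : s.dst ∈ interiorNodes (s :: p) := by
  obtain ⟨t, q, rfl⟩ := List.exists_cons_of_ne_nil hp
  simp [interiorNodes, pathNodes]

theorem IsPathFromTo.interiorNodes_eq (h : IsPathFromTo G p a b) :
    interiorNodes p = p.tail.map Step.src := by
  cases h with
  | nil => rfl
  | cons _ hp _ => simp [interiorNodes, pathNodes, hp.cons_map_dst]

theorem IsPathFromTo.src_mem_interiorNodes (h : IsPathFromTo G (p ++ [s]) a b) (hp : p ≠ []) :
    s.src ∈ interiorNodes (p ++ [s]) := by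
  simp [h.interiorNodes_eq, List.tail_append_of_ne_nil hp]

theorem dir_or_exists_of_forbProjection_dir (h : (forbProjection G F).dir a b) :
    G.dir a b ∨ ∃ v ∈ F, Relation.ReflTransGen G.dir v b := by
  obtain ⟨-, -, p, ⟨hp, hfwd, ha, hb⟩, hF⟩ := h
  cases hp.isPathFromTo ha hb with
  | nil => exact absurd rfl hp.nonempty
  | @cons s p b hs hp _ =>
    obtain ⟨hkind, hfwd⟩ := List.forall_mem_cons.1 hfwd
    rcases eq_or_ne p [] with rfl | hne
    · obtain rfl : s.dst = b := by simpa using hp.cons_map_dst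
      exact .inl (by simpa [stepOK, hkind] using hs)
    · exact .inr ⟨s.dst, hF _ (dst_mem_interiorNodes hne), hp.reflTransGen hfwd⟩

theorem dir_of_headAtSrc (hG : ∀ a b, ¬ G.bidir a b) (hs : stepOK G s)
    (hhead : headAtSrc s.kind) : G.dir s.dst s.src := by
  cases hkind : s.kind <;> simp_all [stepOK, headAtSrc]

theorem dir_of_headAtDst (hG : ∀ a b, ¬ G.bidir a b) (hs : stepOK G s)
    (hhead : headAtDst s.kind) : G.dir s.src s.dst := by
  cases hkind : s.kind <;> simp_all [stepOK, headAtDst]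

theorem exists_dir_of_forbProjection_bidir (hG : ∀ a b, ¬ G.bidir a b)
    (h : (forbProjection G F).bidir a b) :
    (∃ u ∈ F, G.dir u a) ∧ ∃ v ∈ F, G.dir v b := by
  obtain ⟨-, -, p, hp, ha, hb, hint, ⟨s, q, hps, hs⟩, ⟨t, r, hpt, ht⟩, hF⟩ := h
  have hpath := hp.isPathFromTo ha hb
  constructor
  · subst hps
    obtain rfl := hpath.src_eq_of_cons
    have hq : q ≠ [] := by
      rintro rfl
      simp [interiorNodes, pathNodes] at hint
    exact ⟨s.dst, (hF _ (dst_mem_interiorNodes hq)).1,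
      dir_of_headAtSrc hG (hp.valid s (by simp)) hs⟩
  · subst hpt
    obtain rfl := hpath.dst_eq_of_concat
    have hr : r ≠ [] := by
      rintro rfl
      simp [interiorNodes, pathNodes] at hint
    exact ⟨t.src, (hF _ (hpath.src_mem_interiorNodes hr)).1,
      dir_of_headAtDst hG (hp.valid t (by simp)) ht⟩

theorem ne_of_forbProjection_bidir (h : (forbProjection G F).bidir a b) : a ≠ b := by
  rintro rfl
  obtain ⟨-, -, p, hp, ha, hb, -⟩ := h
  cases hp.isPathFromTo ha hb with
  | nil => exact hp.nonempty rfl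
  | cons _ hp hsrc => exact hsrc (by simp [hp.cons_map_dst])

end Causal

open Causal in
theorem new_edges_in_forbidden_projection_are_into_Y_general
    {V : Type*} (D : MixedGraph V) (X Y : Set V) (hD : ∀ a b, ¬ D.bidir a b)
    (hexists : ∃ Z, validAdjDAG D X Y Z) :
    (∀ a b, (dagProj D X Y).dir a b → ¬ D.dir a b → b ∈ Y) ∧
    (∀ a b, (dagProj D X Y).bidir a b → a ∈ Y ∧ b ∈ Y ∧ a ≠ b) ∧
    (∀ a b, (dagProj D X Y).undir a b → D.undir a b) := by
  obtain ⟨Z, hZ⟩ := hexists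
  refine ⟨fun a b hab hnew => ?_, fun a b hab => ?_, fun a b hab => hab.2.2⟩
  · obtain ⟨v, hv, hvb⟩ := (dir_or_exists_of_forbProjection_dir hab).resolve_left hnew
    exact hZ.mem_of_reflTransGen hv hvb hab.2.1
  · obtain ⟨⟨u, hu, hua⟩, v, hv, hvb⟩ := exists_dir_of_forbProjection_bidir hD hab
    exact ⟨hZ.mem_of_reflTransGen hu (.single hua) hab.1,
      hZ.mem_of_reflTransGen hv (.single hvb) hab.2.1, ne_of_forbProjection_bidir hab⟩

open Causal in
/-- If a valid adjustment set relative to `(X,{Y})` exists in a DAG `D`,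
then every edge present in the forbidden projection `D^{XY}` but not in `D` is a
directed edge into `Y` (in particular `D^{XY}` has no bi-directed edges, and every
undirected edge of `D^{XY}` is one of `D`). -/
theorem new_edges_in_forbidden_projection_are_into_Y
    {V : Type*} [Fintype V] (D : MixedGraph V) (X : Set V) (Y : V)
    (hD : IsDAG D) (hY : Y ∉ X)
    (hexists : ∃ Z, validAdjDAG D X {Y} Z) :
    (∀ a b, (dagProj D X {Y}).dir a b → ¬ D.dir a b → b = Y) ∧
    (∀ a b, ¬ (dagProj D X {Y}).bidir a b) ∧
    (∀ a b, (dagProj D X {Y}).undir a b → D.undir a b) := by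
  obtain ⟨hdir, hbidir, hundir⟩ :=
    new_edges_in_forbidden_projection_are_into_Y_general D X {Y} hD.no_bidir hexists
  exact ⟨hdir, fun a b hab => have ⟨ha, hb, hne⟩ := hbidir a b hab; hne (ha.trans hb.symm), hundir⟩
end

section
/- Let X and Y be distinct nodes of a DAG D and let Z be a valid adjustment set relative to ({X},{Y}) in D (generalised adjustment criterion). Consider the pruning procedure which, starting from Z' = Z, repeatedly removes from Z' any node Z_i ∈ Z' such that Y is d-separated from Z_i given {X} ∪ (Z' \ {Z_i}) in D, until no such node remains. Then the resulting set Z' is a valid adjustment set relative to ({X},{Y}) in D, and Z' does not depend on the order in which nodes are removed. -/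
/-!
Let `p` be a proper path from `A` to `B` that is blocked by `S ∪ C` but not by `C`. Fewer nodes
never open a collider, so `p` has a non-collider in `S`, and its suffix from there joins `S` to `B`.
If `S` and `B` are d-separated given `A ∪ C`, this suffix is blocked by `A ∪ C`; as a suffix of a
proper path it avoids `A`, hence it is blocked by `C`, and with it `p`. So `C` blocks `p` after all.

With `A = {X}` this shows that a pruning step preserves validity. With `A = {z}` it is the
intersection property of d-separation, by which a removable node stays removable once another one
has been removed. Hence pruning has the diamond property, and Church–Rosser makes its result unique.
-/

namespace Causal

variable {V : Type*} {G : MixedGraph V} {p r : List (Step V)} {a b v x y : V}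
  {A B C S Z Z₁ Z₂ : Set V}

section StepPairs

theorem mem_stepPairs_iff_infix {s t : Step V} : (s, t) ∈ stepPairs p ↔ [s, t] <:+: p := by
  induction p with
  | nil => simp [stepPairs]
  | cons u p ih =>
    cases p with
    | nil => simp [stepPairs, List.infix_cons_iff]
    | cons w p =>
      have stepPairs_cons : stepPairs (u :: w :: p) = (u, w) :: stepPairs (w :: p) := rfl
      simp [stepPairs_cons, List.infix_cons_iff (l₂ := w :: p), ih]

theorem interiorNodes_eq_map_stepPairs (p : List (Step V)) :
    interiorNodes p = (stepPairs p).map fun q => Step.dst q.1 := by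
  induction p with
  | nil => rfl
  | cons s p ih =>
    cases p with
    | nil => rfl
    | cons t p => exact congrArg (Step.dst s :: ·) ih

theorem mem_interiorNodes_iff_infix :
    v ∈ interiorNodes p ↔ ∃ s t, [s, t] <:+: p ∧ Step.dst s = v := by
  simp [interiorNodes_eq_map_stepPairs, mem_stepPairs_iff_infix]

theorem colliderAt_iff_infix :
    colliderAt p v ↔ ∃ s t, [s, t] <:+: p ∧
      Step.dst s = v ∧ headAtDst (Step.kind s) ∧ headAtSrc (Step.kind t) := by
  simp [colliderAt, mem_stepPairs_iff_infix]

theorem tail_pathNodes (p : List (Step V)) : (pathNodes p).tail = p.map Step.dst := by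
  cases p <;> rfl

theorem mem_tail_of_mem_interiorNodes (hv : v ∈ interiorNodes p) : v ∈ (pathNodes p).tail :=
  List.drop_one ▸ List.mem_of_mem_dropLast hv

end StepPairs

section Suffix

theorem pathNodes_suffix (hp : p.IsChain fun s t => Step.dst s = Step.src t) (hr : r <:+ p) :
    pathNodes r <:+ pathNodes p := by
  obtain ⟨l, rfl⟩ := hr
  induction l with
  | nil => exact List.suffix_rfl
  | cons s l ih =>
    refine (ih hp.tail).trans ?_
    rw [List.cons_append] at hp ⊢
    cases h : l ++ r with
    | nil => exact List.nil_suffix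
    | cons t q =>
      rw [h, List.isChain_cons_cons] at hp
      simp [pathNodes, hp.1]

theorem IsPath.of_suffix (hp : IsPath G p) (hr : r <:+ p) (hne : r ≠ []) : IsPath G r where
  nonempty := hne
  valid s hs := hp.valid s (hr.subset hs)
  chain := List.IsChain.suffix hp.chain hr
  nodup := hp.nodup.sublist (pathNodes_suffix hp.chain hr).sublist

theorem endsAt.of_suffix (hb : endsAt p b) (hr : r <:+ p) (hne : r ≠ []) : endsAt r b := by
  obtain ⟨l, rfl⟩ := hr
  cases l <;> cases r <;> simp_all [endsAt, pathNodes, List.getLast?_cons]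

theorem colliderAt.of_suffix (hv : colliderAt r v) (hr : r <:+ p) : colliderAt p v := by
  rw [colliderAt_iff_infix] at hv ⊢
  obtain ⟨s, t, hst, hcollider⟩ := hv
  exact ⟨s, t, hst.trans hr.isInfix, hcollider⟩

theorem mem_interiorNodes_of_suffix (hv : v ∈ interiorNodes r) (hr : r <:+ p) :
    v ∈ interiorNodes p := by
  rw [mem_interiorNodes_iff_infix] at hv ⊢
  obtain ⟨s, t, hst, hsv⟩ := hv
  exact ⟨s, t, hst.trans hr.isInfix, hsv⟩

theorem nonColliderAt.of_suffix (hv : nonColliderAt r v) (hr : r <:+ p)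
    (hp : (p.map Step.dst).Nodup) : nonColliderAt p v := by
  induction p with
  | nil => rwa [← List.suffix_nil.1 hr]
  | cons s p ih =>
    rcases List.suffix_cons_iff.1 hr with rfl | hr'
    · exact hv
    obtain ⟨hs, hp⟩ := List.nodup_cons.1 hp
    obtain ⟨hvp, hncol⟩ := ih hr' hp
    refine ⟨mem_interiorNodes_of_suffix hvp (List.suffix_cons s p), fun hcol => ?_⟩
    obtain ⟨s', t, hst, rfl, hheads⟩ := colliderAt_iff_infix.1 hcol
    rcases List.infix_cons_iff.1 hst with hprefix | hinfix
    · obtain rfl : s' = s := (List.cons_prefix_cons.1 hprefix).1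
      exact hs (tail_pathNodes p ▸ mem_tail_of_mem_interiorNodes hvp)
    · exact hncol (colliderAt_iff_infix.2 ⟨s', t, hinfix, rfl, hheads⟩)

theorem blocked.of_suffix (hC : blocked G r C) (hr : r <:+ p) (hp : (p.map Step.dst).Nodup) :
    blocked G p C :=
  hC.imp (fun ⟨v, hv, hncol⟩ => ⟨v, hv, hncol.of_suffix hr hp⟩)
    (fun ⟨v, hcol, hanc⟩ => ⟨v, hcol.of_suffix hr, hanc⟩)

theorem exists_suffix_startsAt_of_mem_interiorNodes
    (hp : p.IsChain fun s t => Step.dst s = Step.src t) (hv : v ∈ interiorNodes p) :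
    ∃ r, r <:+ p ∧ r ≠ [] ∧ startsAt r v := by
  obtain ⟨s, t, ⟨l, m, rfl⟩, rfl⟩ := mem_interiorNodes_iff_infix.1 hv
  have hst := List.isChain_pair.1 (hp.infix ⟨l, m, rfl⟩)
  exact ⟨t :: m, ⟨l ++ [s], by simp⟩, by simp, by simp [startsAt, pathNodes, hst]⟩

end Suffix

section Reversal

/-- The kind of an edge when it is traversed in the opposite direction. -/
def EdgeKind.reverse : EdgeKind → EdgeKind
  | fwd => bwd
  | bwd => fwd
  | und => und
  | bid => bid

/-- The step traversing the same edge in the opposite direction. -/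
def Step.reverse (s : Step V) : Step V :=
  (Step.dst s, (Step.kind s).reverse, Step.src s)

/-- The path traversed from its last node to its first, used for the symmetry of d-separation. -/
def reversePath (p : List (Step V)) : List (Step V) := (p.map Step.reverse).reverse

theorem Step.reverse_involutive : Function.Involutive (Step.reverse (V := V)) := by
  rintro ⟨a, k, b⟩
  cases k <;> rfl

theorem reversePath_involutive : Function.Involutive (reversePath (V := V)) := fun p => by
  simp [reversePath, Step.reverse_involutive.comp_self]

theorem headAtDst_reverse (k : EdgeKind) : headAtDst k.reverse ↔ headAtSrc k := by
  cases k <;> rfl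

theorem headAtSrc_reverse (k : EdgeKind) : headAtSrc k.reverse ↔ headAtDst k := by
  cases k <;> rfl

theorem stepOK_reverse {s : Step V} (hs : stepOK G s) : stepOK G (Step.reverse s) := by
  obtain ⟨a, k, b⟩ := s
  cases k
  case fwd | bwd => exact hs
  case und | bid => exact Or.symm hs

theorem isChain_reversePath (hp : p.IsChain fun s t => Step.dst s = Step.src t) :
    (reversePath p).IsChain fun s t => Step.dst s = Step.src t :=
  List.isChain_reverse.2 ((List.isChain_map _).2 (hp.imp fun _ _ hst => hst.symm))

theorem pathNodes_reversePath (hp : p.IsChain fun s t => Step.dst s = Step.src t) :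
    pathNodes (reversePath p) = (pathNodes p).reverse := by
  induction p with
  | nil => rfl
  | cons s p ih =>
    cases p with
    | nil => rfl
    | cons t p =>
      obtain ⟨hst, hp⟩ := List.isChain_cons_cons.1 hp
      have pathNodes_concat (q : List (Step V)) (hq : q ≠ []) (u : Step V) :
          pathNodes (q ++ [u]) = pathNodes q ++ [Step.dst u] := by
        cases q <;> simp_all [pathNodes]
      calc pathNodes (reversePath (s :: t :: p))
          = pathNodes (reversePath (t :: p) ++ [Step.reverse s]) := by simp [reversePath]
        _ = (pathNodes (t :: p)).reverse ++ [Step.src s] := by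
          rw [pathNodes_concat _ (by simp [reversePath]), ih hp]; rfl
        _ = (pathNodes (s :: t :: p)).reverse := by simp [pathNodes, hst]

theorem IsPath.reversePath (hp : IsPath G p) : IsPath G (reversePath p) where
  nonempty := by simpa [Causal.reversePath] using hp.nonempty
  valid s hs := by
    obtain ⟨t, ht, rfl⟩ := List.mem_map.1 (List.mem_reverse.1 hs)
    exact stepOK_reverse (hp.valid t ht)
  chain := isChain_reversePath hp.chain
  nodup := by simpa [pathNodes_reversePath hp.chain] using hp.nodup

theorem interiorNodes_reversePath (hp : p.IsChain fun s t => Step.dst s = Step.src t) :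
    interiorNodes (reversePath p) = (interiorNodes p).reverse := by
  simp [interiorNodes, pathNodes_reversePath hp, List.tail_dropLast]

theorem colliderAt.reversePath (hp : p.IsChain fun s t => Step.dst s = Step.src t)
    (hv : colliderAt p v) : colliderAt (reversePath p) v := by
  rw [colliderAt_iff_infix] at hv ⊢
  obtain ⟨s, t, hst, rfl, hs, ht⟩ := hv
  refine ⟨Step.reverse t, Step.reverse s, ?_, ?_,
    (headAtDst_reverse _).2 ht, (headAtSrc_reverse _).2 hs⟩
  · exact List.reverse_infix.2 (hst.map Step.reverse)
  · exact (List.isChain_pair.1 (hp.infix hst)).symm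

theorem colliderAt_reversePath_iff (hp : p.IsChain fun s t => Step.dst s = Step.src t) :
    colliderAt (reversePath p) v ↔ colliderAt p v :=
  ⟨fun hv => reversePath_involutive p ▸ hv.reversePath (isChain_reversePath hp),
    fun hv => hv.reversePath hp⟩

theorem blocked_reversePath_iff (hp : p.IsChain fun s t => Step.dst s = Step.src t) :
    blocked G (reversePath p) C ↔ blocked G p C := by
  simp only [blocked, nonColliderAt, interiorNodes_reversePath hp, List.mem_reverse,
    colliderAt_reversePath_iff hp]

end Reversal

section DSeparation

theorem dSep.symm (h : dSep G A B C) : dSep G B A C := by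
  intro p b a hb ha hp hstart hend
  rw [← blocked_reversePath_iff hp.chain]
  apply h (reversePath p) a b ha hb hp.reversePath
  · rwa [startsAt, pathNodes_reversePath hp.chain, List.head?_reverse]
  · rwa [endsAt, pathNodes_reversePath hp.chain, List.getLast?_reverse]

theorem blocked.exists_nonColliderAt_or_blocked (h : blocked G p (S ∪ C)) :
    (∃ v ∈ S, nonColliderAt p v) ∨ blocked G p C := by
  rcases h with ⟨v, hvS | hvC, hv⟩ | ⟨v, hv, hanc⟩
  · exact Or.inl ⟨v, hvS, hv⟩
  · exact Or.inr (Or.inl ⟨v, hvC, hv⟩)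
  · exact Or.inr (Or.inr ⟨v, hv, fun ⟨c, hc, hvc⟩ => hanc ⟨c, Or.inr hc, hvc⟩⟩)

theorem properFromTo.blocked_of_dSep (hp : properFromTo G p A B) (hS : dSep G S B (A ∪ C))
    (h : blocked G p (S ∪ C)) : blocked G p C := by
  obtain ⟨hpath, -, ⟨b, hb, hend⟩, hproper⟩ := hp
  obtain ⟨v, hvS, hv⟩ | hC := h.exists_nonColliderAt_or_blocked
  swap
  · exact hC
  obtain ⟨r, hr, hne, hstart⟩ := exists_suffix_startsAt_of_mem_interiorNodes hpath.chain hv.1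
  have hrAC : blocked G r (A ∪ C) :=
    hS r v b hvS hb (hpath.of_suffix hr hne) hstart (hend.of_suffix hr hne)
  obtain ⟨w, hwA, hw⟩ | hrC := hrAC.exists_nonColliderAt_or_blocked
  · have hwp : w ∈ interiorNodes p := mem_interiorNodes_of_suffix hw.1 hr
    exact absurd hwA (hproper w (mem_tail_of_mem_interiorNodes hwp))
  · exact hrC.of_suffix hr (tail_pathNodes p ▸ hpath.nodup.tail)

theorem IsPath.properFromTo_singleton (hp : IsPath G p) (ha : startsAt p a) (hb : endsAt p b)
    (hbB : b ∈ B) : properFromTo G p {a} B := by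
  refine ⟨hp, ⟨a, rfl, ha⟩, ⟨b, hbB, hb⟩, ?_⟩
  rintro v hv rfl
  obtain ⟨l, hl⟩ := List.head?_eq_some_iff.1 ha
  have hnodup := hp.nodup
  rw [hl] at hv hnodup
  exact (List.nodup_cons.1 hnodup).1 hv

theorem dSep.intersection (hS : dSep G S B (insert a C)) (ha : dSep G {a} B (S ∪ C)) :
    dSep G {a} B C := by
  rintro p _ b rfl hb hp hstart hend
  exact (hp.properFromTo_singleton hstart hend hb).blocked_of_dSep hS
    (ha p _ b rfl hb hp hstart hend)

theorem validAdjDAG.sdiff (hZ : validAdjDAG G A B Z) (hS : S ⊆ Z)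
    (hsep : dSep G B S (A ∪ (Z \ S))) : validAdjDAG G A B (Z \ S) := by
  obtain ⟨hAB, hforb, hblocked⟩ := hZ
  refine ⟨Set.subset_eq_empty (Set.inter_subset_inter_left _ Set.sdiff_subset) hAB,
    Set.subset_eq_empty (Set.inter_subset_inter_left _ Set.sdiff_subset) hforb,
    fun p hp hcausal => hp.blocked_of_dSep hsep.symm ?_⟩
  rw [Set.union_sdiff_cancel hS]
  exact hblocked p hp hcausal

end DSeparation

section Pruning

theorem pruneStep.validAdjDAG (h : pruneStep G x y Z Z₁)
    (hZ : validAdjDAG G {x} {y} Z) : validAdjDAG G {x} {y} Z₁ := by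
  obtain ⟨z, hz, hsep, rfl⟩ := h
  exact hZ.sdiff (Set.singleton_subset_iff.2 hz) hsep

theorem dSep.sdiff_singleton {w z : V} (hw : w ∈ Z) (hz : z ∈ Z) (hne : w ≠ z)
    (hsepw : dSep G {y} {w} (A ∪ (Z \ {w}))) (hsepz : dSep G {y} {z} (A ∪ (Z \ {z}))) :
    dSep G {y} {z} (A ∪ ((Z \ {w}) \ {z})) := by
  have hzw : z ∈ Z \ {w} := ⟨hz, hne.symm⟩
  have hwz : w ∈ Z \ {z} := ⟨hw, hne⟩
  refine (dSep.intersection (S := {w}) ?_ ?_).symm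
  · rw [← Set.union_insert, Set.insert_sdiff_self_of_mem hzw]
    exact hsepw.symm
  · rw [Set.sdiff_sdiff_comm, Set.union_left_comm, Set.singleton_union,
      Set.insert_sdiff_self_of_mem hwz]
    exact hsepz.symm

theorem pruneStep_diamond (h₁ : pruneStep G x y Z Z₁) (h₂ : pruneStep G x y Z Z₂) :
    ∃ W, Relation.ReflGen (pruneStep G x y) Z₁ W ∧
      Relation.ReflTransGen (pruneStep G x y) Z₂ W := by
  obtain ⟨w, hw, hsepw, rfl⟩ := h₁
  obtain ⟨z, hz, hsepz, rfl⟩ := h₂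
  obtain rfl | hne := eq_or_ne w z
  · exact ⟨_, .refl, .refl⟩
  refine ⟨(Z \ {w}) \ {z}, .single ?_, .single ?_⟩
  · exact ⟨z, ⟨hz, hne.symm⟩, hsepw.sdiff_singleton hw hz hne hsepz, rfl⟩
  · exact ⟨w, ⟨hw, hne⟩, hsepz.sdiff_singleton hz hw hne.symm hsepw, Set.sdiff_sdiff_comm⟩

theorem pruneResult.validAdjDAG (h : pruneResult G x y Z Z₁) (hZ : validAdjDAG G {x} {y} Z) :
    validAdjDAG G {x} {y} Z₁ := by
  obtain ⟨hsteps, -⟩ := h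
  induction hsteps with
  | refl => exact hZ
  | tail _ hstep ih => exact hstep.validAdjDAG ih

theorem pruneResult.eq_of_reflTransGen {W : Set V} (h : pruneResult G x y Z Z₁)
    (hW : Relation.ReflTransGen (pruneStep G x y) Z₁ W) : W = Z₁ :=
  (Relation.reflTransGen_iff_eq fun _ ⟨z, hz, hsep, _⟩ => h.2 z hz hsep).1 hW

theorem pruneResult.unique (h₁ : pruneResult G x y Z Z₁) (h₂ : pruneResult G x y Z Z₂) :
    Z₁ = Z₂ := by
  obtain ⟨W, hW₁, hW₂⟩ :=
    Relation.church_rosser (fun _ _ _ => pruneStep_diamond) h₁.1 h₂.1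
  exact (h₁.eq_of_reflTransGen hW₁).symm.trans (h₂.eq_of_reflTransGen hW₂)

end Pruning

end Causal

open Causal in
theorem pruning_yields_valid_adjustment_and_is_order_independent_general
    {V : Type*} (G : MixedGraph V) (X Y : V) (Z : Set V) :
    (validAdjDAG G {X} {Y} Z → ∀ Z', pruneResult G X Y Z Z' → validAdjDAG G {X} {Y} Z') ∧
    (∀ Z₁ Z₂, pruneResult G X Y Z Z₁ → pruneResult G X Y Z Z₂ → Z₁ = Z₂) :=
  ⟨fun hZ _ h => h.validAdjDAG hZ, fun _ _ h₁ h₂ => h₁.unique h₂⟩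

open Causal in
/-- Pruning a valid adjustment set `Z` relative to `({X},{Y})` in a
DAG `D` (repeatedly removing any `z ∈ Z'` with `Y ⟂ z ∣ {X} ∪ (Z' \ {z})`) yields a
valid adjustment set, and the result does not depend on the removal order. -/
theorem pruning_yields_valid_adjustment_and_is_order_independent
    {V : Type*} [Fintype V] (D : MixedGraph V) (X Y : V) (Z : Set V)
    (hD : IsDAG D) (hXY : X ≠ Y)
    (hZ : validAdjDAG D {X} {Y} Z) :
    (∀ Z', pruneResult D X Y Z Z' → validAdjDAG D {X} {Y} Z') ∧
    (∀ Z₁ Z₂, pruneResult D X Y Z Z₁ → pruneResult D X Y Z Z₂ → Z₁ = Z₂) := by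
  obtain ⟨hvalid, hunique⟩ :=
    pruning_yields_valid_adjustment_and_is_order_independent_general D X Y Z
  exact ⟨hvalid hZ, hunique⟩
end
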